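/- arXiv:2101.01845 — 8 statements merged into one kernel-verified Lean document; each statement's English description precedes it below -/
import Mathlib

section
/- Let X be a separable metrizable topological space, let f ⊆ X × X be a relation satisfying condition Γ, and let P be a partially ordered set. Then the Mahavier product M(X,f,P) is separable and metrizable if and only if P is countable. -/
/-- The Mahavier product `M(X,f,Q)`: functions `x : Q → X` with `x p ∈ f (x q)`
(i.e. `(x q, x p) ∈ f`) whenever `p ≼ q`, as a subspace of `X^Q`. -/
def mahavier {X : Type*} (f : Set (X × X)) (Q : Type*) [Preorder Q] : Set (Q → X) :=
  {x | ∀ p q : Q, p ≤ q → (x q, x p) ∈ f}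

/-- Condition Γ: there exist distinct `x, y` with `(x,x), (x,y), (y,y) ∈ f`. -/
def conditionGamma {X : Type*} (f : Set (X × X)) : Prop :=
  ∃ x y : X, x ≠ y ∧ (x, x) ∈ f ∧ (x, y) ∈ f ∧ (y, y) ∈ f

/-!
For a lower set `L ⊆ P` and `x, y` witnessing condition Γ, the function with value `y` on `L` and
`x` off `L` lies in `M(X,f,P)`. Applied to the sets `{q | q ≤ p}`, this gives points `u p` of
`M(X,f,P)` such that, when some open set contains `y` but not `x`, the condition "coordinate `q`
lies in that open set" is open and holds at `u p` exactly when `q ≤ p`. Antisymmetry then forces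
different `p` to have different basic neighbourhoods of `u p`, so a countable basis makes `P`
countable. The complements of the sets `{q | p ≤ q}` serve when the open set contains `x` instead.
-/

open Set Topology TopologicalSpace

theorem separableSpace_and_metrizableSpace_iff_secondCountableTopology
    {Z : Type*} [TopologicalSpace Z] [T3Space Z] :
    SeparableSpace Z ∧ MetrizableSpace Z ↔ SecondCountableTopology Z := by
  refine ⟨fun ⟨_, _⟩ ↦ ?_, fun _ ↦ ⟨inferInstance, metrizableSpace_of_t3_secondCountable Z⟩⟩
  let := pseudoMetrizableSpaceUniformity Z
  have := pseudoMetrizableSpaceUniformity_countably_generated Z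
  exact UniformSpace.secondCountable_of_separable Z

theorem countable_of_mem_nhds_of_antisymm {ι Z : Type*} [TopologicalSpace Z]
    [SecondCountableTopology Z] {u : ι → Z} {W : ι → Set Z} (hW : ∀ i, W i ∈ 𝓝 (u i))
    (h_antisymm : ∀ i j, u i ∈ W j → u j ∈ W i → i = j) : Countable ι := by
  choose B hB_basis hu_mem hB_subset using fun i ↦
    (isBasis_countableBasis Z).mem_nhds_iff.1 (hW i)
  have hB_injective : B.Injective := fun i j h ↦
    h_antisymm i j (hB_subset j (h ▸ hu_mem i)) (hB_subset i (h ▸ hu_mem j))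
  have hB_mapsTo : MapsTo B univ (countableBasis Z) := fun i _ ↦ hB_basis i
  exact countable_univ_iff.1 <|
    hB_mapsTo.countable_of_injOn hB_injective.injOn (countable_countableBasis Z)

section Mahavier

variable {X : Type*} {f : Set (X × X)}

theorem ite_mem_mahavier {Q : Type*} [Preorder Q] {x y : X} (hxx : (x, x) ∈ f)
    (hxy : (x, y) ∈ f) (hyy : (y, y) ∈ f) {L : Set Q} [DecidablePred (· ∈ L)]
    (hL : IsLowerSet L) : (fun q ↦ if q ∈ L then y else x) ∈ mahavier f Q := by
  intro p q hpq
  by_cases hq : q ∈ L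
  · simpa only [hq, hL hpq hq, if_true] using hyy
  · by_cases hp : p ∈ L
    · simpa only [hp, hq, if_true, if_false] using hxy
    · simpa only [hp, hq, if_false] using hxx

variable [TopologicalSpace X]

theorem isOpen_setOf_apply_mem_mahavier {Q : Type*} [Preorder Q] {U : Set X} (hU : IsOpen U)
    (q : Q) : IsOpen {z : mahavier f Q | z.1 q ∈ U} :=
  hU.preimage ((continuous_apply q).comp continuous_subtype_val)

theorem countable_of_secondCountableTopology_mahavier [T0Space X] (hf : conditionGamma f)
    (P : Type*) [PartialOrder P] [SecondCountableTopology (mahavier f P)] : Countable P := by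
  classical
  obtain ⟨x, y, hne, hxx, hxy, hyy⟩ := hf
  let step (L : LowerSet P) : mahavier f P :=
    ⟨fun q ↦ if q ∈ (L : Set P) then y else x, ite_mem_mahavier hxx hxy hyy L.lower⟩
  obtain ⟨U, hU, ⟨hxU, hyU⟩ | ⟨hyU, hxU⟩⟩ := exists_isOpen_xor_mem hne
  · let u (p : P) := step (UpperSet.Ici p).compl
    have u_mem (p q : P) : (u p).1 q ∈ U ↔ p ≤ q := by
      by_cases h : p ≤ q <;> simp [u, step, h, hxU, hyU]
    exact countable_of_mem_nhds_of_antisymm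
      (fun p ↦ (isOpen_setOf_apply_mem_mahavier hU p).mem_nhds ((u_mem p p).2 le_rfl))
      fun p q hpq hqp ↦ le_antisymm ((u_mem p q).1 hpq) ((u_mem q p).1 hqp)
  · let u (p : P) := step (LowerSet.Iic p)
    have u_mem (p q : P) : (u p).1 q ∈ U ↔ q ≤ p := by
      by_cases h : q ≤ p <;> simp [u, step, h, hxU, hyU]
    exact countable_of_mem_nhds_of_antisymm
      (fun p ↦ (isOpen_setOf_apply_mem_mahavier hU p).mem_nhds ((u_mem p p).2 le_rfl))
      fun p q hpq hqp ↦ le_antisymm ((u_mem q p).1 hqp) ((u_mem p q).1 hpq)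

theorem secondCountableTopology_mahavier_iff_countable [T0Space X] [SecondCountableTopology X]
    (hf : conditionGamma f) (P : Type*) [PartialOrder P] :
    SecondCountableTopology (mahavier f P) ↔ Countable P :=
  ⟨fun _ ↦ countable_of_secondCountableTopology_mahavier hf P, fun _ ↦ inferInstance⟩

end Mahavier

/-- For separable metrizable `X`, a relation `f` satisfying condition Γ, and a partial
order `P`, the Mahavier product `M(X,f,P)` is separable and metrizable iff `P` is
countable. -/
theorem mahavier_separable_metrizable_iff_countable
    {X : Type*} [TopologicalSpace X] [TopologicalSpace.SeparableSpace X]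
    [TopologicalSpace.MetrizableSpace X]
    {f : Set (X × X)} (hf : conditionGamma f)
    (P : Type*) [PartialOrder P] :
    (TopologicalSpace.SeparableSpace (mahavier f P) ∧
      TopologicalSpace.MetrizableSpace (mahavier f P)) ↔ Countable P := by
  have : SecondCountableTopology X :=
    separableSpace_and_metrizableSpace_iff_secondCountableTopology.1 ⟨‹_›, ‹_›⟩
  rw [separableSpace_and_metrizableSpace_iff_secondCountableTopology]
  exact secondCountableTopology_mahavier_iff_countable hf P
end

section
/- Let P be a partially ordered set and let Ď(P) be the set of downward subsets of P, equipped with the POTS topology of the partial order ⊆ on Ď(P). Then Ď(P) is second-countable if and only if P is countable. -/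
/-- The POTS topology on a preordered set `S`: generated by the subbasis
`{{r | ¬ r ≤ s} : s ∈ S} ∪ {{r | ¬ s ≤ r} : s ∈ S}`. -/
def potsTopology (S : Type*) [Preorder S] : TopologicalSpace S :=
  TopologicalSpace.generateFrom
    ({U | ∃ s : S, U = {r : S | ¬ r ≤ s}} ∪ {U | ∃ s : S, U = {r : S | ¬ s ≤ r}})

/-- `Ď(P)`: the set of downward (lower) subsets of `P`. -/
def DCheck (P : Type*) [Preorder P] : Type _ := {A : Set P // IsLowerSet A}

/-- `Ď(P)` is partially ordered by inclusion. -/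
instance {P : Type*} [Preorder P] : PartialOrder (DCheck P) :=
  Subtype.partialOrder _

/-- `Ď(P)` carries the POTS topology of `⊆`. -/
instance {P : Type*} [Preorder P] : TopologicalSpace (DCheck P) :=
  potsTopology (DCheck P)

/-!
The sets `{A | p ∈ A}` and their complements form a subbasis of the topology of `Ď(P)`, a countable
one if `P` is countable. Conversely, each principal lower set `↓p` lies in the open set
`{A | p ∈ A}`, and if `↓p` and `↓q` lie in each other's open sets, then `p ≤ q ≤ p`. Choosing for
each `p` a basic open set between `{↓p}` and `{A | p ∈ A}` is therefore injective, so a basis is at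
least as large as `P`. For a preorder, the same argument counts the classes of the relation
`p ≤ q ≤ p`.
-/

open TopologicalSpace

theorem toAntisymmetrization_injective {α : Type*} {r : α → α → Prop} [IsPreorder α r]
    [Std.Antisymm r] : Function.Injective (toAntisymmetrization r) :=
  fun _ _ h ↦ AntisymmRel.eq (Quotient.exact h)

theorem countable_of_mem_isOpen_antisymm {X ι : Type*} [TopologicalSpace X]
    [SecondCountableTopology X] {x : ι → X} {U : ι → Set X} (hU : ∀ i, IsOpen (U i))
    (hx : ∀ i, x i ∈ U i) (hxU : ∀ i j, x i ∈ U j → x j ∈ U i → i = j) : Countable ι := by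
  choose B hB hxB hBU using fun i ↦
    (isBasis_countableBasis X).exists_subset_of_mem_open (hx i) (hU i)
  have hB_inj : B.Injective := fun i j hij ↦
    hxU i j (hBU j (hij ▸ hxB i)) (hBU i (hij ▸ hxB j))
  have h_countable : (Set.univ : Set ι).Countable :=
    Set.MapsTo.countable_of_injOn (fun i _ ↦ hB i) hB_inj.injOn (countable_countableBasis X)
  exact Set.countable_univ_iff.1 h_countable

theorem le_potsTopology_iff {S : Type*} [Preorder S] {t : TopologicalSpace S} :
    t ≤ potsTopology S ↔ ∀ s : S, IsClosed (Set.Iic s) ∧ IsClosed (Set.Ici s) := by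
  simp only [← isOpen_compl_iff]
  refine ⟨fun h s ↦ ⟨h _ ?_, h _ ?_⟩, fun h ↦ le_generateFrom ?_⟩
  · exact isOpen_generateFrom_of_mem (.inl ⟨s, rfl⟩)
  · exact isOpen_generateFrom_of_mem (.inr ⟨s, rfl⟩)
  · rintro _ (⟨s, rfl⟩ | ⟨s, rfl⟩)
    exacts [(h s).1, (h s).2]

namespace DCheck

variable {P : Type*} [Preorder P]

/-- The principal lower set `↓p`, as a point of `Ď(P)`. -/
def principal (p : P) : DCheck P := ⟨Set.Iic p, isLowerSet_Iic p⟩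

/-- The largest lower set that does not contain `p`, as a point of `Ď(P)`. -/
def avoiding (p : P) : DCheck P := ⟨(Set.Ici p)ᶜ, (isUpperSet_Ici p).compl⟩

/-- The set of all points of `Ď(P)` that contain `p`; these sets and their complements form a
subbasis of the topology, indexed by `P` rather than by `Ď(P)`. -/
def containing (p : P) : Set (DCheck P) := {A | p ∈ A.1}

theorem Ici_principal (p : P) : Set.Ici (principal p) = containing p :=
  Set.ext fun A ↦ ⟨fun h ↦ h le_rfl, fun hp _ hq ↦ A.2 hq hp⟩

theorem Iic_avoiding (p : P) : Set.Iic (avoiding p) = (containing p)ᶜ :=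
  Set.ext fun A ↦ ⟨fun h hp ↦ h hp le_rfl, fun hp _ hq hpq ↦ hp (A.2 hpq hq)⟩

theorem Ici_eq_biInter_containing (B : DCheck P) : Set.Ici B = ⋂ p ∈ B.1, containing p := by
  ext A
  rw [Set.mem_iInter₂]
  rfl

theorem Iic_eq_biInter_compl_containing (B : DCheck P) :
    Set.Iic B = ⋂ p ∈ B.1ᶜ, (containing p)ᶜ := by
  ext A
  rw [Set.mem_iInter₂]
  exact Set.compl_subset_compl.symm

theorem principal_mem_containing_iff {p q : P} : principal p ∈ containing q ↔ q ≤ p := Iff.rfl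

theorem containing_anti {p q : P} (h : p ≤ q) : containing q ⊆ containing p :=
  fun A hq ↦ A.2 h hq

theorem isClopen_containing (p : P) : IsClopen (containing p) := by
  have h_closed := le_potsTopology_iff.1 (le_refl (potsTopology (DCheck P)))
  constructor
  · exact Ici_principal p ▸ (h_closed (principal p)).2
  · rw [← isClosed_compl_iff, ← Iic_avoiding]
    exact (h_closed (avoiding p)).1

theorem potsTopology_eq_generateFrom_containing :
    potsTopology (DCheck P) =
      generateFrom (Set.range containing ∪ compl '' Set.range containing) := by
  apply le_antisymm
  · apply le_generateFrom
    rintro _ (⟨p, rfl⟩ | ⟨_, ⟨p, rfl⟩, rfl⟩)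
    exacts [(isClopen_containing p).isOpen, (isClopen_containing p).compl.isOpen]
  · let := generateFrom (Set.range (containing (P := P)) ∪ compl '' Set.range containing)
    have h_clopen (p : P) : IsClopen (containing p) :=
      ⟨⟨isOpen_generateFrom_of_mem (.inr ⟨_, ⟨p, rfl⟩, rfl⟩)⟩,
        isOpen_generateFrom_of_mem (.inl ⟨p, rfl⟩)⟩
    refine le_potsTopology_iff.2 fun B ↦ ⟨?_, ?_⟩
    · rw [Iic_eq_biInter_compl_containing]
      exact isClosed_biInter fun p _ ↦ (h_clopen p).compl.isClosed
    · rw [Ici_eq_biInter_containing]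
      exact isClosed_biInter fun p _ ↦ (h_clopen p).isClosed

theorem countable_range_containing [Countable (Antisymmetrization P (· ≤ ·))] :
    (Set.range (containing (P := P))).Countable := by
  have h_lift (p q : P) (h : AntisymmRel (· ≤ ·) p q) : containing p = containing q :=
    (containing_anti h.2).antisymm (containing_anti h.1)
  let f : Antisymmetrization P (· ≤ ·) → Set (DCheck P) := Quot.lift containing h_lift
  have h_range : Set.range f = Set.range containing := Set.range_quot_lift h_lift
  exact h_range ▸ Set.countable_range f

theorem countable_antisymmetrization [SecondCountableTopology (DCheck P)] :
    Countable (Antisymmetrization P (· ≤ ·)) :=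
  countable_of_mem_isOpen_antisymm
    (x := fun a ↦ principal (ofAntisymmetrization (· ≤ ·) a))
    (fun a ↦ (isClopen_containing (ofAntisymmetrization (· ≤ ·) a)).isOpen)
    (fun _ ↦ principal_mem_containing_iff.2 le_rfl)
    (fun _ _ hba hab ↦ le_antisymm
      (ofAntisymmetrization_le_ofAntisymmetrization_iff.1 (principal_mem_containing_iff.1 hab))
      (ofAntisymmetrization_le_ofAntisymmetrization_iff.1 (principal_mem_containing_iff.1 hba)))

theorem secondCountableTopology [Countable (Antisymmetrization P (· ≤ ·))] :
    SecondCountableTopology (DCheck P) :=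
  ⟨_, countable_range_containing.union (countable_range_containing.image _),
    potsTopology_eq_generateFrom_containing⟩

end DCheck

theorem dCheck_secondCountable_iff_countable_general (P : Type*) [Preorder P] :
    SecondCountableTopology (DCheck P) ↔ Countable (Antisymmetrization P (· ≤ ·)) :=
  ⟨fun _ ↦ DCheck.countable_antisymmetrization, fun _ ↦ DCheck.secondCountableTopology⟩

/-- `Ď(P)` with its POTS topology is second-countable iff `P` is countable. -/
theorem dCheck_secondCountable_iff_countable (P : Type*) [PartialOrder P] :
    SecondCountableTopology (DCheck P) ↔ Countable P :=
  (dCheck_secondCountable_iff_countable_general P).trans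
    ⟨fun _ ↦ (toAntisymmetrization_injective (r := (· ≤ ·))).countable, fun _ ↦ Quotient.countable⟩
end

section
/- Let P be a partially ordered set. The map h : Ď(P) → M(2,γ,P) sending each downward set A to its characteristic function (h(A)(p) = 1 if p ∈ A, and 0 otherwise) is a homeomorphism from Ď(P) with its POTS topology onto the Mahavier product M(2,γ,P). -/
/-- The relation `γ = {(0,0),(0,1),(1,1)}` on `2 = {0,1}`, i.e. `γ(0) = {0,1}` and
`γ(1) = {1}`. -/
def gammaRel : Set (Fin 2 × Fin 2) := {x | x.1 = 0 ∨ x.2 = 1}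

open Classical

/-!
Membership of a fixed point `p` is a clopen condition on `Ď(P)`: `p ∈ A` says that the principal
down-set of `p` lies below `A`, and `p ∉ A` says that `A` lies below the complement of the
principal up-set of `p`. Conversely `A ⊆ B` is an intersection of such conditions, so the POTS
topology is the topology of pointwise convergence of characteristic functions. Since `γ` is the
order of `2`, the functions in `M(2,γ,P)` are the antitone ones, which are exactly the
characteristic functions of down-sets.
-/

open scoped Topology in
theorem continuous_potsTopology_iff {X S : Type*} [TopologicalSpace X] [Preorder S] {f : X → S} :
    Continuous[_, potsTopology S] f ↔
      ∀ s, IsClosed (f ⁻¹' Set.Iic s) ∧ IsClosed (f ⁻¹' Set.Ici s) := by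
  refine continuous_generateFrom_iff.trans
    ⟨fun h s => ⟨⟨h _ (.inl ⟨s, rfl⟩)⟩, ⟨h _ (.inr ⟨s, rfl⟩)⟩⟩, ?_⟩
  rintro h _ (⟨s, rfl⟩ | ⟨s, rfl⟩)
  · exact (h s).1.isOpen_compl
  · exact (h s).2.isOpen_compl

theorem antitone_indicator {α M : Type*} [Preorder α] [Preorder M] [Zero M] {s : Set α} {f : α → M}
    (hs : IsLowerSet s) (hf : Antitone f) (f_nonneg : 0 ≤ f) : Antitone (s.indicator f) := by
  intro a b hab
  by_cases hb : b ∈ s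
  · simpa only [Set.indicator_of_mem hb, Set.indicator_of_mem (hs hab hb)] using hf hab
  · simpa only [Set.indicator_of_notMem hb] using Set.indicator_apply_nonneg fun _ => f_nonneg a

theorem isLowerSet_preimage_singleton_of_isMax {α β : Type*} [Preorder α] [PartialOrder β]
    {f : α → β} {b : β} (hf : Antitone f) (hb : IsMax b) : IsLowerSet (f ⁻¹' {b}) := by
  rintro _ a hab rfl
  exact (hb.eq_of_le (hf hab)).symm

theorem mem_gammaRel_iff_le {a b : Fin 2} : (a, b) ∈ gammaRel ↔ a ≤ b := by
  simp only [gammaRel, Set.mem_ofPred_eq]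
  omega

theorem mem_mahavier_gammaRel_iff_antitone {Q : Type*} [Preorder Q] {x : Q → Fin 2} :
    x ∈ mahavier gammaRel Q ↔ Antitone x :=
  forall₂_congr fun _ _ => imp_congr_right fun _ => mem_gammaRel_iff_le

namespace DCheck

variable {P : Type*} [Preorder P]

instance : ClosedIicTopology (DCheck P) where
  isClosed_Iic A := (continuous_potsTopology_iff.1 continuous_id A).1

instance : ClosedIciTopology (DCheck P) where
  isClosed_Ici A := (continuous_potsTopology_iff.1 continuous_id A).2

theorem Ici_Iic_eq_setOf_mem (p : P) :
    Set.Ici (⟨Set.Iic p, isLowerSet_Iic p⟩ : DCheck P) = {A | p ∈ A.val} :=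
  Set.ext fun A => ⟨fun h => h (le_refl p), fun hp => A.property.Iic_subset hp⟩

theorem Iic_compl_Ici_eq_compl_setOf_mem (p : P) :
    Set.Iic (⟨(Set.Ici p)ᶜ, (isUpperSet_Ici p).compl⟩ : DCheck P) = {A | p ∈ A.val}ᶜ :=
  Set.ext fun A => ⟨fun h hp => h hp (le_refl p), fun hp _ hq hpq => hp (A.property hpq hq)⟩

theorem isClopen_setOf_mem (p : P) : IsClopen {A : DCheck P | p ∈ A.val} :=
  ⟨Ici_Iic_eq_setOf_mem p ▸ isClosed_Ici,
    isClosed_compl_iff.1 (Iic_compl_Ici_eq_compl_setOf_mem p ▸ isClosed_Iic)⟩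

theorem continuous_iff_isClopen_setOf_mem {X : Type*} [TopologicalSpace X] {f : X → DCheck P} :
    Continuous f ↔ ∀ p, IsClopen {x | p ∈ (f x).val} := by
  refine ⟨fun hf p => (isClopen_setOf_mem p).preimage hf,
    fun hf => continuous_potsTopology_iff.2 fun A => ⟨?_, ?_⟩⟩
  · have preimage_Iic : f ⁻¹' Set.Iic A = ⋂ p ∈ A.valᶜ, {x | p ∈ (f x).val}ᶜ := by
      ext x
      simp only [Set.mem_iInter]
      exact Set.compl_subset_compl.symm
    rw [preimage_Iic]
    exact isClosed_biInter fun p _ => (hf p).compl.isClosed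
  · have preimage_Ici : f ⁻¹' Set.Ici A = ⋂ p ∈ A.val, {x | p ∈ (f x).val} := by
      ext x
      simp only [Set.mem_iInter]
      rfl
    rw [preimage_Ici]
    exact isClosed_biInter fun p _ => (hf p).isClosed

/-- The characteristic-function bijection between `Ď(P)` and `M(2,γ,P)`; its inverse sends `x` to
the level set `{p | x p = 1}`. -/
noncomputable def equivMahavier (P : Type*) [Preorder P] : DCheck P ≃ mahavier gammaRel P where
  toFun A := ⟨A.val.indicator 1, mem_mahavier_gammaRel_iff_antitone.2 <|
    antitone_indicator A.property antitone_const fun _ => zero_le_one⟩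
  invFun x := ⟨x.val ⁻¹' {1}, isLowerSet_preimage_singleton_of_isMax
    (mem_mahavier_gammaRel_iff_antitone.1 x.property) isMax_top⟩
  left_inv A := Subtype.ext <| by
    ext p
    simp [Set.indicator_apply]
  right_inv x := Subtype.ext <| by
    ext p
    simp only [Set.indicator_apply, Set.mem_preimage, Set.mem_singleton_iff, Pi.one_apply]
    split_ifs <;> omega

theorem continuous_equivMahavier : Continuous (equivMahavier P) :=
  Continuous.subtype_mk (continuous_pi fun p =>
    (isClopen_setOf_mem p).continuous_indicator continuous_one) _

theorem continuous_equivMahavier_symm : Continuous (equivMahavier P).symm :=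
  continuous_iff_isClopen_setOf_mem.2 fun p =>
    (isClopen_discrete {1}).preimage ((continuous_apply p).comp continuous_subtype_val)

/-- The characteristic-function map as a homeomorphism from `Ď(P)` onto `M(2,γ,P)`. -/
noncomputable def homeomorphMahavier (P : Type*) [Preorder P] :
    DCheck P ≃ₜ mahavier gammaRel P where
  toEquiv := equivMahavier P
  continuous_toFun := continuous_equivMahavier
  continuous_invFun := continuous_equivMahavier_symm

end DCheck

theorem dCheck_homeomorph_mahavier_general (P : Type*) [Preorder P] :
    ∃ h : DCheck P ≃ₜ mahavier gammaRel P,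
      ∀ (A : DCheck P) (p : P),
        ((h A : P → Fin 2) p) = if p ∈ A.val then 1 else 0 :=
  ⟨DCheck.homeomorphMahavier P, fun A _ => Set.indicator_apply A.val 1 _⟩

/-- The map sending a downward set `A ∈ Ď(P)` to its characteristic function
(`1` on `A`, `0` off `A`) is a homeomorphism of `Ď(P)` (with the POTS topology)
onto the Mahavier product `M(2,γ,P)`. -/
theorem dCheck_homeomorph_mahavier (P : Type*) [PartialOrder P] :
    ∃ h : DCheck P ≃ₜ mahavier gammaRel P,
      ∀ (A : DCheck P) (p : P),
        ((h A : P → Fin 2) p) = if p ∈ A.val then 1 else 0 :=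
  dCheck_homeomorph_mahavier_general P
end

section
/- Let P be a partially ordered set and equip Ď(P), the set of downward subsets of P ordered by ⊆, with its POTS topology. Then Ď(P) is a continuous POTS: for all X, Y ∈ Ď(P) with X ⊄ Y there exist disjoint open sets U, V in Ď(P) with X ∈ U, Y ∈ V, U upward (A ∈ U and A ⊆ B imply B ∈ U) and V downward (A ∈ V and B ⊆ A imply B ∈ V). Concretely, for x ∈ X \ Y one may take U = {A ∈ Ď(P) : ¬(A ⊆ x^{¬≥})} and V = {A ∈ Ď(P) : ¬(x^≤ ⊆ A)}. -/
/-! A downward set `A` satisfies `A ⊆ x^{¬≥}` iff `x ∉ A`, and `x^≤ ⊆ A` iff `x ∈ A`. Hence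
`Ď(P)` is the union of the closed sets `{A | A ⊆ x^{¬≥}}` and `{A | x^≤ ⊆ A}`, so their complements
are disjoint; for `x ∈ X \ Y` the first complement contains `X` and the second contains `Y`. -/

theorem closedIicTopology_potsTopology (S : Type*) [Preorder S] :
    @ClosedIicTopology S (potsTopology S) _ :=
  letI := potsTopology S
  ⟨fun s => ⟨TopologicalSpace.isOpen_generateFrom_of_mem (Or.inl ⟨s, rfl⟩)⟩⟩

theorem closedIciTopology_potsTopology (S : Type*) [Preorder S] :
    @ClosedIciTopology S (potsTopology S) _ :=
  letI := potsTopology S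
  ⟨fun s => ⟨TopologicalSpace.isOpen_generateFrom_of_mem (Or.inr ⟨s, rfl⟩)⟩⟩

section OrderSeparates

variable {S : Type*} [Preorder S] [TopologicalSpace S]

/-- `U` and `V` witness the continuity of a partially ordered topological space at `¬ a ≤ b`: they
are disjoint open neighbourhoods of `a` and `b`, with `U` upward and `V` downward. -/
def OrderSeparates (U V : Set S) (a b : S) : Prop :=
  IsOpen U ∧ IsOpen V ∧ a ∈ U ∧ b ∈ V ∧ Disjoint U V ∧
    (∀ c d, c ∈ U → c ≤ d → d ∈ U) ∧ (∀ c d, c ∈ V → d ≤ c → d ∈ V)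

theorem OrderSeparates.compl_Iic_compl_Ici [ClosedIicTopology S] [ClosedIciTopology S]
    {s t a b : S} (hst : ∀ r, r ≤ s ∨ t ≤ r) (ha : ¬ a ≤ s) (hb : ¬ t ≤ b) :
    OrderSeparates (Set.Iic s)ᶜ (Set.Ici t)ᶜ a b :=
  ⟨isClosed_Iic.isOpen_compl, isClosed_Ici.isOpen_compl, ha, hb,
    Set.disjoint_left.2 fun r hrs htr => (hst r).elim hrs htr,
    fun _ _ hc hcd => (isLowerSet_Iic s).compl hcd hc,
    fun _ _ hc hdc => (isUpperSet_Ici t).compl hdc hc⟩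

end OrderSeparates

namespace DCheck

variable {P : Type*} [Preorder P]

instance inst_s7 : ClosedIicTopology (DCheck P) := closedIicTopology_potsTopology _

instance inst_s7_2 : ClosedIciTopology (DCheck P) := closedIciTopology_potsTopology _

/-- The principal downward set `x^≤`, as an element of `Ď(P)`. -/
def Iic (x : P) : DCheck P := ⟨Set.Iic x, isLowerSet_Iic x⟩

/-- The downward set `x^{¬≥}`, as an element of `Ď(P)`. -/
def complIci (x : P) : DCheck P := ⟨(Set.Ici x)ᶜ, (isUpperSet_Ici x).compl⟩

theorem Iic_le_iff {x : P} {A : DCheck P} : Iic x ≤ A ↔ x ∈ A.val :=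
  ⟨fun h => h le_rfl, fun hx => A.property.Iic_subset hx⟩

theorem le_complIci_iff {x : P} {A : DCheck P} : A ≤ complIci x ↔ x ∉ A.val :=
  ⟨fun h hx => h hx le_rfl, fun hx _ hr hxr => hx (A.property hxr hr)⟩

theorem le_complIci_or_Iic_le (x : P) (A : DCheck P) : A ≤ complIci x ∨ Iic x ≤ A := by
  rw [le_complIci_iff, Iic_le_iff]
  exact (em (x ∈ A.val)).symm

theorem orderSeparates_of_mem_diff {X Y : DCheck P} {x : P} (hx : x ∈ X.val \ Y.val) :
    OrderSeparates (Set.Iic (complIci x))ᶜ (Set.Ici (Iic x))ᶜ X Y :=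
  .compl_Iic_compl_Ici (le_complIci_or_Iic_le x)
    (fun h => le_complIci_iff.1 h hx.1) (fun h => hx.2 (Iic_le_iff.1 h))

end DCheck

theorem dCheck_continuous_pots_general (P : Type*) [Preorder P] :
    (∀ X Y : DCheck P, ¬ X ≤ Y → ∃ U V : Set (DCheck P), OrderSeparates U V X Y) ∧
    (∀ X Y : DCheck P, ∀ x ∈ X.val \ Y.val,
      OrderSeparates {A : DCheck P | ¬ A.val ⊆ {r : P | ¬ x ≤ r}}
        {A : DCheck P | ¬ Set.Iic x ⊆ A.val} X Y) := by
  refine ⟨fun X Y hXY => ?_, fun _ _ _ hx => DCheck.orderSeparates_of_mem_diff hx⟩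
  obtain ⟨x, hxX, hxY⟩ := Set.not_subset.1 hXY
  exact ⟨_, _, DCheck.orderSeparates_of_mem_diff ⟨hxX, hxY⟩⟩

/-- `Ď(P)` is a continuous POTS: for `X ⊄ Y` in `Ď(P)` there are disjoint open `U ∋ X`
(upward) and `V ∋ Y` (downward); concretely, for `x ∈ X \ Y` one may take
`U = {A : ¬(A ⊆ x^{¬≥})}` and `V = {A : ¬(x^≤ ⊆ A)}`. -/
theorem dCheck_continuous_pots (P : Type*) [PartialOrder P] :
    (∀ X Y : DCheck P, ¬ X.val ⊆ Y.val →
      ∃ U V : Set (DCheck P), IsOpen U ∧ IsOpen V ∧ X ∈ U ∧ Y ∈ V ∧ Disjoint U V ∧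
        (∀ A B : DCheck P, A ∈ U → A.val ⊆ B.val → B ∈ U) ∧
        (∀ A B : DCheck P, A ∈ V → B.val ⊆ A.val → B ∈ V)) ∧
    (∀ X Y : DCheck P, ¬ X.val ⊆ Y.val → ∀ x ∈ X.val \ Y.val,
      IsOpen {A : DCheck P | ¬ A.val ⊆ {r : P | ¬ x ≤ r}} ∧
      IsOpen {A : DCheck P | ¬ Set.Iic x ⊆ A.val} ∧
      X ∈ {A : DCheck P | ¬ A.val ⊆ {r : P | ¬ x ≤ r}} ∧
      Y ∈ {A : DCheck P | ¬ Set.Iic x ⊆ A.val} ∧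
      Disjoint {A : DCheck P | ¬ A.val ⊆ {r : P | ¬ x ≤ r}}
        {A : DCheck P | ¬ Set.Iic x ⊆ A.val} ∧
      (∀ A B : DCheck P, A ∈ {A : DCheck P | ¬ A.val ⊆ {r : P | ¬ x ≤ r}} →
        A.val ⊆ B.val → B ∈ {A : DCheck P | ¬ A.val ⊆ {r : P | ¬ x ≤ r}}) ∧
      (∀ A B : DCheck P, A ∈ {A : DCheck P | ¬ Set.Iic x ⊆ A.val} →
        B.val ⊆ A.val → B ∈ {A : DCheck P | ¬ Set.Iic x ⊆ A.val})) :=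
  ⟨(dCheck_continuous_pots_general P).1,
    fun X Y _ => (dCheck_continuous_pots_general P).2 X Y⟩
end

section
/- Let Q be a preordered set and let Q* be its antisymmetrization: the partial order of equivalence classes of Q under the relation p ∼ q iff p ≼ q and q ≼ p. Then the Mahavier products M(2,γ,Q) and M(2,γ,Q*) are homeomorphic, via the map sending x ∈ M(2,γ,Q) to the function [p] ↦ x(p) (which is well-defined since x is constant on ∼-classes). -/
/-!
When `p` and `q` lie below each other, `γ` relates `x p` and `x q` in both directions, and `γ` is
antisymmetric, so a point of the Mahavier product takes equal values at `p` and `q`. Since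
`M(X, f, -)` is contravariantly functorial for monotone maps, maps that are mutually inverse up to
`∼` therefore induce mutually inverse continuous maps of Mahavier products. The projection
`Q → Q*` and any section of it are such a pair.
-/

namespace mahavier

variable {X P Q : Type*} {f : Set (X × X)} [Preorder P] [Preorder Q]

theorem apply_eq_of_antisymmRel (hf : Std.Antisymm fun a b => (a, b) ∈ f) (x : mahavier f Q)
    {p q : Q} (hpq : AntisymmRel (· ≤ ·) p q) : (x : Q → X) p = (x : Q → X) q :=
  hf.antisymm _ _ (x.2 q p hpq.2) (x.2 p q hpq.1)

/-- The map `M(X, f, Q) → M(X, f, P)` of Mahavier products induced by a monotone map `φ : P → Q`,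
namely precomposition with `φ`. -/
def pullback {φ : P → Q} (hφ : Monotone φ) (x : mahavier f Q) : mahavier f P :=
  ⟨(x : Q → X) ∘ φ, fun p q hpq => x.2 (φ p) (φ q) (hφ hpq)⟩

theorem pullback_pullback_of_antisymmRel (hf : Std.Antisymm fun a b => (a, b) ∈ f)
    {φ : P → Q} {ψ : Q → P} (hφ : Monotone φ) (hψ : Monotone ψ)
    (hφψ : ∀ q, AntisymmRel (· ≤ ·) (φ (ψ q)) q) (x : mahavier f Q) :
    pullback hψ (pullback hφ x) = x :=
  Subtype.ext <| funext fun q => apply_eq_of_antisymmRel hf x (hφψ q)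

variable [TopologicalSpace X]

theorem continuous_pullback {φ : P → Q} (hφ : Monotone φ) :
    Continuous (pullback hφ : mahavier f Q → mahavier f P) :=
  ((Pi.continuous_precomp φ).comp continuous_subtype_val).subtype_mk _

/-- The homeomorphism of Mahavier products of an antisymmetric relation induced by an equivalence
of preorders, given as a pair of monotone maps that are mutually inverse up to `AntisymmRel`. -/
def homeomorphOfAntisymmRel (hf : Std.Antisymm fun a b => (a, b) ∈ f)
    {φ : P → Q} {ψ : Q → P} (hφ : Monotone φ) (hψ : Monotone ψ)
    (hφψ : ∀ q, AntisymmRel (· ≤ ·) (φ (ψ q)) q) (hψφ : ∀ p, AntisymmRel (· ≤ ·) (ψ (φ p)) p) :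
    mahavier f Q ≃ₜ mahavier f P where
  toFun := pullback hφ
  invFun := pullback hψ
  left_inv := pullback_pullback_of_antisymmRel hf hφ hψ hφψ
  right_inv := pullback_pullback_of_antisymmRel hf hψ hφ hψφ
  continuous_toFun := continuous_pullback hφ
  continuous_invFun := continuous_pullback hψ

end mahavier

theorem antisymmRel_ofAntisymmetrization_toAntisymmetrization {α : Type*} (r : α → α → Prop)
    [IsPreorder α r] (a : α) :
    AntisymmRel r (ofAntisymmetrization r (toAntisymmetrization r a)) a :=
  Quotient.exact (toAntisymmetrization_ofAntisymmetrization r (toAntisymmetrization r a))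

theorem antisymm_gammaRel : Std.Antisymm fun a b => (a, b) ∈ gammaRel where
  antisymm a b (hab : a = 0 ∨ b = 1) (hba : b = 0 ∨ a = 1) := by lia

theorem mahavier_homeomorph_antisymmetrization_general {X : Type*} [TopologicalSpace X]
    {f : Set (X × X)} (hf : Std.Antisymm fun a b => (a, b) ∈ f) (Q : Type*) [Preorder Q] :
    ∃ e : mahavier f Q ≃ₜ mahavier f (Antisymmetrization Q (· ≤ ·)),
      ∀ (x : mahavier f Q) (p : Q),
        (e x : Antisymmetrization Q (· ≤ ·) → X) (toAntisymmetrization (· ≤ ·) p) =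
          (x : Q → X) p :=
  have section_proj (p : Q) := antisymmRel_ofAntisymmetrization_toAntisymmetrization (· ≤ ·) p
  have proj_section (a : Antisymmetrization Q (· ≤ ·)) :
      AntisymmRel (· ≤ ·) (toAntisymmetrization (· ≤ ·) (ofAntisymmetrization (· ≤ ·) a)) a :=
    .of_eq (toAntisymmetrization_ofAntisymmetrization (· ≤ ·) a)
  ⟨mahavier.homeomorphOfAntisymmRel hf (OrderEmbedding.ofAntisymmetrization Q).monotone
      toAntisymmetrization_mono section_proj proj_section,
    fun x p => mahavier.apply_eq_of_antisymmRel hf x (section_proj p)⟩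

/-- For a preorder `Q` with antisymmetrization `Q* = Antisymmetrization Q (· ≤ ·)`,
the Mahavier products `M(2,γ,Q)` and `M(2,γ,Q*)` are homeomorphic, via the map
sending `x` to `[p] ↦ x p`. -/
theorem mahavier_homeomorph_antisymmetrization (Q : Type*) [Preorder Q] :
    ∃ e : mahavier gammaRel Q ≃ₜ mahavier gammaRel (Antisymmetrization Q (· ≤ ·)),
      ∀ (x : mahavier gammaRel Q) (p : Q),
        (e x : Antisymmetrization Q (· ≤ ·) → Fin 2) (toAntisymmetrization (· ≤ ·) p) =
          (x : Q → Fin 2) p :=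
  mahavier_homeomorph_antisymmetrization_general antisymm_gammaRel Q
end

section
/- Let P be a partially ordered set. The Mahavier product M(2,γ,P) is a closed subset of the Tychonoff product 2^P; consequently M(2,γ,P) is compact. -/
theorem isClosed_mahavier {X : Type*} [TopologicalSpace X] {f : Set (X × X)} (hf : IsClosed f)
    (Q : Type*) [Preorder Q] : IsClosed (mahavier f Q) := by
  simp only [mahavier, Set.ofPred_forall]
  exact isClosed_iInter fun p => isClosed_iInter fun q => isClosed_iInter fun _ =>
    hf.preimage ((continuous_apply q).prodMk (continuous_apply p))

theorem mahavier_gamma_isClosed_isCompact_general {X : Type*} [TopologicalSpace X]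
    [CompactSpace X] {f : Set (X × X)} (hf : IsClosed f) (Q : Type*) [Preorder Q] :
    IsClosed (mahavier f Q) ∧ IsCompact (mahavier f Q) :=
  ⟨isClosed_mahavier hf Q, (isClosed_mahavier hf Q).isCompact⟩

/-- `M(2,γ,P)` is a closed subset of the Tychonoff product `2^P`, hence compact. -/
theorem mahavier_gamma_isClosed_isCompact (P : Type*) [PartialOrder P] :
    IsClosed (mahavier gammaRel P) ∧ IsCompact (mahavier gammaRel P) :=
  mahavier_gamma_isClosed_isCompact_general (isClosed_discrete gammaRel) P
end

section
/- The set of finite subsets of ℕ, partially ordered by inclusion ⊆ and equipped with its POTS topology, is not a Hausdorff space. -/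
/-! The atoms of `Finset ℕ` are the singletons. There are infinitely many of them, but only finitely
many below each element, and nothing but `⊥` lies strictly below an atom. Hence a sequence of
distinct atoms eventually enters each subbasic open set containing a given point: it converges to
every point at once. -/

section Preorder

open Filter

variable {S : Type*} [Preorder S]

theorem le_nhds_potsTopology_iff {l : Filter S} {x : S} :
    l ≤ @nhds S (potsTopology S) x ↔
      (∀ s, ¬ x ≤ s → ∀ᶠ r in l, ¬ r ≤ s) ∧ (∀ s, ¬ s ≤ x → ∀ᶠ r in l, ¬ s ≤ r) := by
  rw [← tendsto_id', potsTopology, TopologicalSpace.tendsto_nhds_generateFrom_iff]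
  constructor
  · exact fun h ↦ ⟨fun s ↦ h _ (.inl ⟨s, rfl⟩), fun s ↦ h _ (.inr ⟨s, rfl⟩)⟩
  · rintro ⟨h_not_le, h_not_ge⟩ U (⟨s, rfl⟩ | ⟨s, rfl⟩)
    exacts [h_not_le s, h_not_ge s]

variable [OrderBot S]

theorem cofinite_inf_principal_isAtom_le_nhds_potsTopology
    (finite_atoms_le : ∀ s : S, {a | IsAtom a ∧ a ≤ s}.Finite) (x : S) :
    cofinite ⊓ 𝓟 {a : S | IsAtom a} ≤ @nhds S (potsTopology S) x := by
  have eventually_not_le (s : S) : ∀ᶠ a in cofinite, IsAtom a → ¬ a ≤ s := by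
    simpa only [eventually_cofinite, Classical.not_imp, not_not] using finite_atoms_le s
  simp only [le_nhds_potsTopology_iff, eventually_inf_principal]
  refine ⟨fun s _ ↦ eventually_not_le s, fun s hsx ↦ ?_⟩
  filter_upwards [eventually_not_le s] with a not_le ha hsa
  have hs : s = ⊥ := ha.2 s (lt_of_le_not_ge hsa (not_le ha))
  exact hsx (hs ▸ bot_le)

theorem finsetNat_pots_not_t2_general
    (infinite_atoms : {a : S | IsAtom a}.Infinite)
    (finite_atoms_le : ∀ s : S, {a | IsAtom a ∧ a ≤ s}.Finite) :
    ¬ @T2Space S (potsTopology S) := by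
  let := potsTopology S
  intro _
  have := infinite_atoms.cofinite_inf_principal_neBot
  have atoms_le_nhds := cofinite_inf_principal_isAtom_le_nhds_potsTopology finite_atoms_le
  obtain ⟨a, ha⟩ := infinite_atoms.nonempty
  exact ha.1 (tendsto_nhds_unique (tendsto_id'.2 (atoms_le_nhds a))
    (tendsto_id'.2 (atoms_le_nhds ⊥)))

end Preorder

/-- The set of finite subsets of `ℕ`, ordered by inclusion and given the POTS
topology, is not Hausdorff. -/
theorem finsetNat_pots_not_t2 :
    letI : TopologicalSpace (Finset ℕ) := potsTopology (Finset ℕ)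
    ¬ T2Space (Finset ℕ) :=
  finsetNat_pots_not_t2_general
    (Set.infinite_of_injective_forall_mem Finset.singleton_injective Finset.isAtom_singleton)
    fun s ↦ (Set.finite_Iic s).subset fun _ ha ↦ ha.2
end

section
/- Let P be a partially ordered set. The map sending each downward set A ∈ Ď(P) to its characteristic function (the function x : P → {0,1} with x(p) = 1 iff p ∈ A) is a bijection from Ď(P) onto the Mahavier product M(2,γ,P) (as sets). -/
/-!
The relation `γ` is the order `0 ≤ 1` of `2`, read as a set of pairs, so `M(2,γ,P)` is the set of
antitone functions `P → 2`. Subsets of `P` correspond to functions `P → 2` through their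
characteristic functions, and a subset is downward exactly when its characteristic function is
antitone.
-/

open Classical

section

variable {α M : Type*} [Zero M] {c : M}

theorem indicator_const_injective (hc : c ≠ 0) :
    Function.Injective fun A : Set α => A.indicator fun _ => c := by
  have mem_iff (A : Set α) (p : α) : p ∈ A ↔ A.indicator (fun _ => c) p = c := by
    simp [Set.indicator_apply, hc.symm]
  intro A B (h : A.indicator _ = B.indicator _)
  ext p
  rw [mem_iff A, mem_iff B, h]

theorem indicator_const_surjective (hM : ∀ m : M, m = 0 ∨ m = c) :
    Function.Surjective fun A : Set α => A.indicator fun _ => c := by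
  refine fun x => ⟨{p | x p = c}, funext fun p => ?_⟩
  rcases hM (x p) with hp | hp <;> simp [Set.indicator_apply, hp, eq_comm]

theorem antitone_indicator_const_iff [Preorder α] [Preorder M] (hc : 0 < c) {A : Set α} :
    Antitone (A.indicator fun _ => c) ↔ IsLowerSet A := by
  constructor
  · intro hA q p hpq hq
    by_contra hp
    have hle : c ≤ 0 := by simpa [hp, hq] using hA hpq
    exact hle.not_gt hc
  · intro hA p q hpq
    by_cases hq : q ∈ A
    · simp [hq, hA hpq hq]
    · simpa [hq] using Set.indicator_nonneg (fun _ _ => hc.le) p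

theorem bijOn_indicator_const [Preorder α] [Preorder M] (hc : 0 < c)
    (hM : ∀ m : M, m = 0 ∨ m = c) :
    Set.BijOn (fun A : Set α => A.indicator fun _ => c)
      {A | IsLowerSet A} {x | Antitone x} := by
  have hbij : Function.Bijective fun A : Set α => A.indicator fun _ => c :=
    ⟨indicator_const_injective hc.ne', indicator_const_surjective hM⟩
  simpa only [Set.preimage_ofPred_eq, antitone_indicator_const_iff hc] using
    hbij.bijOn_preimage (t := {x | Antitone x})

end

theorem mahavier_le_eq_setOf_antitone (X Q : Type*) [Preorder X] [Preorder Q] :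
    mahavier {x : X × X | x.1 ≤ x.2} Q = {x | Antitone x} :=
  rfl

theorem gammaRel_eq_setOf_fst_le_snd : gammaRel = {x | x.1 ≤ x.2} := by
  ext ⟨a, b⟩
  change a = 0 ∨ b = 1 ↔ a ≤ b
  lia

theorem dCheck_bijection_mahavier_general (P : Type*) [Preorder P] :
    Function.Injective
      (fun A : DCheck P => (fun p : P => if p ∈ A.val then (1 : Fin 2) else 0)) ∧
    Set.range
      (fun A : DCheck P => (fun p : P => if p ∈ A.val then (1 : Fin 2) else 0)) =
      mahavier gammaRel P := by
  have hbij : Set.BijOn (fun A : Set P => A.indicator fun _ => (1 : Fin 2))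
      {A | IsLowerSet A} {x | Antitone x} :=
    bijOn_indicator_const Fin.zero_lt_one (by decide)
  rw [gammaRel_eq_setOf_fst_le_snd, mahavier_le_eq_setOf_antitone]
  -- The `if` in the statement is `Set.indicator` unfolded, with the same classical instance.
  exact ⟨hbij.injOn.injective, (Set.image_eq_range _ _).symm.trans hbij.image_eq⟩

/-- The characteristic-function map is a bijection from `Ď(P)` onto `M(2,γ,P)`:
it is injective and its range is exactly the Mahavier product `M(2,γ,P)`. -/
theorem dCheck_bijection_mahavier (P : Type*) [PartialOrder P] :
    Function.Injective
      (fun A : DCheck P => (fun p : P => if p ∈ A.val then (1 : Fin 2) else 0)) ∧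
    Set.range
      (fun A : DCheck P => (fun p : P => if p ∈ A.val then (1 : Fin 2) else 0)) =
      mahavier gammaRel P :=
  dCheck_bijection_mahavier_general P
end
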